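/- Let X be a compact metric space with a continuous flow τ, and let φ, ψ : X → 𝕋 be continuous maps that are homotopic. Fix x ∈ X and let Φ, Ψ : ℝ → ℝ be continuous lifts of t ↦ φ(τ^t x) and t ↦ ψ(τ^t x), respectively. If lim_{t→∞} Ψ(t)/t exists and equals r, then lim_{t→∞} Φ(t)/t exists and equals r. In other words, the rotation number along any fixed orbit is a homotopy invariant of circle-valued maps. -/

import Mathlib

open Filter Topology Real

noncomputable section

/-- The circle `𝕋 = ℝ/ℤ`. -/
abbrev 𝕋 : Type := AddCircle (1 : ℝ)

/-- The doubling map `T : ω ↦ 2ω` on the circle. -/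
def doubling : 𝕋 → 𝕋 := fun ω => (2 : ℤ) • ω

/-- `cos (2πω)` as a function on the circle. -/
def cos2pi : 𝕋 → ℝ :=
  Function.Periodic.lift (f := fun x : ℝ => Real.cos (2 * π * x)) (c := 1)
    (by intro x; simp [mul_add, Real.cos_add_two_pi])

/-- `sin (2πω)` as a function on the circle. -/
def sin2pi : 𝕋 → ℝ :=
  Function.Periodic.lift (f := fun x : ℝ => Real.sin (2 * π * x)) (c := 1)
    (by intro x; simp [mul_add, Real.sin_add_two_pi])

/-- The solid torus `𝔗 = 𝕋 × D²`, realized as a subset of `𝕋 × ℝ × ℝ`. -/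
def solidTorus : Set (𝕋 × ℝ × ℝ) := {p | p.2.1 ^ 2 + p.2.2 ^ 2 ≤ 1}

/-- The solenoid map `F(ω,x,y) = (2ω, λx + cos(2πω)/2, λy + sin(2πω)/2)`. -/
def solmap (lam : ℝ) : 𝕋 × ℝ × ℝ → 𝕋 × ℝ × ℝ :=
  fun p => (doubling p.1, lam * p.2.1 + cos2pi p.1 / 2, lam * p.2.2 + sin2pi p.1 / 2)

/-- The standard solenoid `S = ⋂ₙ Fⁿ(𝔗)`. -/
def solenoid (lam : ℝ) : Set (𝕋 × ℝ × ℝ) := ⋂ n : ℕ, (solmap lam)^[n] '' solidTorus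

/-!
A homotopy between `φ` and `ψ` contracts the difference `φ - ψ` to `0`, so by homotopy lifting
`φ - ψ` is the reduction of a real-valued function `g`. If `Φ` and `Ψ` lift `φ` and `ψ` along a
curve `γ`, then `Φ - Ψ - g ∘ γ` takes values in the period lattice, hence is constant by
connectedness. As `g` is bounded on compact sets, `Φ - Ψ` is bounded, and this disappears on
division by `t`.
-/

theorem exists_lift_of_homotopic {A E B : Type*} [TopologicalSpace A] [TopologicalSpace E]
    [TopologicalSpace B] {p : E → B} (hp : IsCoveringMap p) {f₀ f₁ : C(A, B)}
    (h : f₀.Homotopic f₁) (F₀ : C(A, E)) (hF₀ : ∀ a, p (F₀ a) = f₀ a) :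
    ∃ F₁ : C(A, E), ∀ a, p (F₁ a) = f₁ a := by
  obtain ⟨H⟩ := h
  have hH : ∀ a, H (0, a) = p (F₀ a) := fun a => (H.apply_zero a).trans (hF₀ a).symm
  refine ⟨(hp.liftHomotopy H F₀ hH).comp (.prodMk (.const A 1) (.id A)), fun a => ?_⟩
  exact (congrFun (hp.liftHomotopy_lifts H F₀ hH) (1, a)).trans (H.apply_one a)

theorem homotopic_zero_sub_of_homotopic {A G : Type*} [TopologicalSpace A] [TopologicalSpace G]
    [AddGroup G] [ContinuousSub G] {φ ψ : C(A, G)} (h : φ.Homotopic ψ) :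
    ContinuousMap.Homotopic 0 (φ - ψ) := by
  let sub : C(G × G, G) := ⟨fun q => q.1 - q.2, continuous_sub⟩
  have hsub : (sub.comp (ψ.prodMk ψ)).Homotopic (sub.comp (φ.prodMk ψ)) :=
    (ContinuousMap.Homotopic.refl sub).comp (h.symm.prodMk (.refl ψ))
  have hzero : sub.comp (ψ.prodMk ψ) = 0 := ContinuousMap.ext fun a => sub_self (ψ a)
  rwa [hzero] at hsub

theorem exists_lift_sub_of_homotopic {A E : Type*} [TopologicalSpace A] [TopologicalSpace E]
    [AddCommGroup E] [IsTopologicalAddGroup E] {p : E}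
    [DiscreteTopology (AddSubgroup.zmultiples p)] {φ ψ : C(A, AddCircle p)}
    (h : φ.Homotopic ψ) : ∃ g : C(A, E), ∀ a, (g a : AddCircle p) = φ a - ψ a :=
  exists_lift_of_homotopic (AddCircle.isCoveringMap_coe p) (homotopic_zero_sub_of_homotopic h)
    0 fun _ => AddCircle.coe_zero p

theorem isBigO_one_comp_of_eventually_mem_isCompact {T X E : Type*} [TopologicalSpace X]
    [SeminormedAddCommGroup E] {g : X → E} {K : Set X} (hK : IsCompact K)
    (hg : ContinuousOn g K) {l : Filter T} {γ : T → X} (hγK : ∀ᶠ t in l, γ t ∈ K) :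
    (g ∘ γ) =O[l] (1 : T → ℝ) := by
  obtain ⟨C, hC⟩ := hK.exists_bound_of_continuousOn hg
  refine .of_bound C (hγK.mono fun t ht => ?_)
  simpa using hC (γ t) ht

theorem isBigO_one_lift_sub_lift_of_homotopic {T X E : Type*} [TopologicalSpace T]
    [PreconnectedSpace T] [TopologicalSpace X] [NormedAddCommGroup E] {p : E}
    [DiscreteTopology (AddSubgroup.zmultiples p)] {φ ψ : C(X, AddCircle p)}
    (h : φ.Homotopic ψ) {K : Set X} (hK : IsCompact K) {l : Filter T} {γ : T → X}
    (hγ : Continuous γ) (hγK : ∀ᶠ t in l, γ t ∈ K) {Φ Ψ : T → E} (hΦ : Continuous Φ)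
    (hΨ : Continuous Ψ) (hΦlift : ∀ t, (Φ t : AddCircle p) = φ (γ t))
    (hΨlift : ∀ t, (Ψ t : AddCircle p) = ψ (γ t)) :
    (Φ - Ψ) =O[l] (1 : T → ℝ) := by
  obtain ⟨g, hg⟩ := exists_lift_sub_of_homotopic h
  have hlattice : ∀ t, ((Φ t - Ψ t - g (γ t) : E) : AddCircle p) = 0 := fun t => by
    rw [AddCircle.coe_sub, AddCircle.coe_sub, hΦlift, hΨlift, hg, sub_self]
  have hconst : ∀ s t, Φ s - Ψ s - g (γ s) = Φ t - Ψ t - g (γ t) :=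
    (AddCircle.isCoveringMap_coe p).const_of_comp
      ((hΦ.sub hΨ).sub (g.continuous.comp hγ)) fun s t => (hlattice s).trans (hlattice t).symm
  obtain hT | ⟨⟨t₀⟩⟩ := isEmpty_or_nonempty T
  · exact .of_bound 0 (.of_forall hT.elim)
  have hdecomp : Φ - Ψ = g ∘ γ + fun _ => Φ t₀ - Ψ t₀ - g (γ t₀) := by
    ext t
    exact (add_eq_of_eq_sub' (hconst t₀ t)).symm
  rw [hdecomp]
  exact (isBigO_one_comp_of_eventually_mem_isCompact hK g.continuous.continuousOn hγK).add
    (Asymptotics.isBigO_const_one ℝ _ l)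

theorem tendsto_div_of_sub_isLittleO {α 𝕜 : Type*} [NormedField 𝕜] {l : Filter α}
    {f g w : α → 𝕜} {r : 𝕜} (hfg : (f - g) =o[l] w)
    (hg : Tendsto (fun a => g a / w a) l (𝓝 r)) :
    Tendsto (fun a => f a / w a) l (𝓝 r) := by
  simpa [sub_div] using hfg.tendsto_div_nhds_zero.add hg

theorem rotation_number_homotopy_invariant_general {X : Type*} [TopologicalSpace X] {p : ℝ}
    {φ ψ : C(X, AddCircle p)} (h : φ.Homotopic ψ) {K : Set X} (hK : IsCompact K) {γ : ℝ → X}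
    (hγ : Continuous γ) (hγK : ∀ᶠ t in atTop, γ t ∈ K) {Φ Ψ : ℝ → ℝ} (hΦ : Continuous Φ)
    (hΨ : Continuous Ψ) (hΦlift : ∀ t, (Φ t : AddCircle p) = φ (γ t))
    (hΨlift : ∀ t, (Ψ t : AddCircle p) = ψ (γ t)) {r : ℝ}
    (hr : Tendsto (fun t => Ψ t / t) atTop (𝓝 r)) :
    Tendsto (fun t => Φ t / t) atTop (𝓝 r) := by
  have hbounded : (Φ - Ψ) =O[atTop] (1 : ℝ → ℝ) :=
    isBigO_one_lift_sub_lift_of_homotopic h hK hγ hγK hΦ hΨ hΦlift hΨlift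
  have hsublinear : (Φ - Ψ) =o[atTop] (id : ℝ → ℝ) :=
    hbounded.trans_isLittleO (Asymptotics.isLittleO_const_id_atTop 1)
  exact tendsto_div_of_sub_isLittleO hsublinear hr

/-- The rotation number along any fixed orbit of a continuous flow on a
compact metric space is a homotopy invariant of circle-valued maps: if `φ` and `ψ` are
homotopic and continuous lifts `Φ, Ψ` of `t ↦ φ(τ^t x)`, `t ↦ ψ(τ^t x)` are given, and
`Ψ(t)/t → r`, then `Φ(t)/t → r`. -/
theorem rotation_number_homotopy_invariant {X : Type*} [MetricSpace X] [CompactSpace X]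
    (τ : ℝ → X → X) (hτ : Continuous fun p : ℝ × X => τ p.1 p.2)
    (hτ0 : τ 0 = id) (hτadd : ∀ s t : ℝ, τ (s + t) = τ s ∘ τ t)
    (φ ψ : C(X, 𝕋)) (h : φ.Homotopic ψ) (x : X)
    (Φ Ψ : ℝ → ℝ) (hΦ : Continuous Φ) (hΨ : Continuous Ψ)
    (hΦlift : ∀ t : ℝ, ((Φ t : ℝ) : 𝕋) = φ (τ t x))
    (hΨlift : ∀ t : ℝ, ((Ψ t : ℝ) : 𝕋) = ψ (τ t x))
    (r : ℝ) (hr : Tendsto (fun t => Ψ t / t) atTop (𝓝 r)) :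
    Tendsto (fun t => Φ t / t) atTop (𝓝 r) := by
  have hγ : Continuous fun t => τ t x := hτ.comp (.prodMk_left x)
  exact rotation_number_homotopy_invariant_general h isCompact_univ hγ
    (.of_forall fun _ => Set.mem_univ _) hΦ hΨ hΦlift hΨlift hr

end
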